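/- Assume the feedback is corrupted in at most C rounds. Then the meta-algorithm satisfies N_F ≤ log₂ T + C + N_T, i.e., the number of Commit calls returning FAIL on incorrect leaves is at most log₂ T + C + N_T. Furthermore its total regret satisfies R_T ≤ Σ_{ℓ∈L} R(ℓ) + 3 log₂ T + 6C + 3 N_T. -/

import Mathlib

/-!
Every search state is assigned its distance `d` to the correct leaf in the dyadic tree
(`tdist`). A visit to an internal node (at most three rounds) during which no feedback is
corrupted moves one edge closer to `ℓ*`: if the interval misses `v`, the safety check fails and
the search backtracks; if it contains `v`, the midpoint query selects the child containing `v`.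
A corrupted visit moves at most one edge away. A FAIL on `ℓ*` moves one edge away, and a FAIL on
any other leaf one edge closer. As `d` starts at `D` and is never negative,
`good visits + N_F ≤ D + bad visits + N_T`, with at most `C` bad visits; this bounds both `N_F`
and the number of internal rounds, each of which costs regret at most `1`.

To run this round by round, `d` is corrected by terms for visits in progress (`credit3` for the
count of internal rounds, `credit1` for the bound on `N_F`), which depend only on the
current state: in the second round of a visit the stored answer `sL` shows whether the first
one was corrupted, and the midpoint is queried after an honest safety check exactly when the
interval contains `v`. `step_bound` is the resulting one-round inequality and `potential_bound`
its sum over the rounds.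
-/

namespace RobustPricing

/-- Phase of the current binary-search step: first endpoint query, second endpoint query,
or midpoint query. -/
inductive Ph | checkL | checkR | mid
deriving DecidableEq

/-- Parent of a node `(d, k)` (representing the dyadic interval `[k/2^d, (k+1)/2^d)`). -/
def parent (p : ℕ × ℕ) : ℕ × ℕ := (p.1 - 1, p.2 / 2)

/-- Left child of a dyadic node. -/
def leftChild (p : ℕ × ℕ) : ℕ × ℕ := (p.1 + 1, 2 * p.2)

/-- Right child of a dyadic node. -/
def rightChild (p : ℕ × ℕ) : ℕ × ℕ := (p.1 + 1, 2 * p.2 + 1)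

/-- Left endpoint `L` of the dyadic interval of a node. -/
noncomputable def nodeL (p : ℕ × ℕ) : ℝ := (p.2 : ℝ) / 2 ^ p.1

/-- Right endpoint `R` of the dyadic interval of a node. -/
noncomputable def nodeR (p : ℕ × ℕ) : ℝ := ((p.2 : ℝ) + 1) / 2 ^ p.1

/-- Midpoint `M = (L+R)/2` of the dyadic interval of a node. -/
noncomputable def nodeM (p : ℕ × ℕ) : ℝ := (2 * (p.2 : ℝ) + 1) / 2 ^ (p.1 + 1)

/-- The leaf `ℓ* = (D, ⌊v·2^D⌋)` at depth `D` containing the valuation `v`. -/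
noncomputable def lstar (v : ℝ) (D : ℕ) : ℕ × ℕ := (D, ⌊v * 2 ^ D⌋₊)

/-- An abstract (possibly randomized) Commit procedure run by the meta-algorithm at leaf
intervals.  It keeps an internal memory of type `M` (never reset, shared across all calls,
as the counters `s_ℓ` of the paper), posts the price `pr ℓ m` at each round of a call on
the leaf `ℓ`, and, after observing the feedback `b` (and an auxiliary random seed `u` for
randomized procedures), `next ℓ m b u = (f, m')` updates the memory to `m'` and returns
FAIL iff `f = true`, in which case the meta-algorithm backtracks to the parent of `ℓ`. -/
structure CommitProc where
  M : Type
  init : M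
  pr : ℕ × ℕ → M → ℝ
  next : ℕ × ℕ → M → Bool → ℝ → Bool × M

/-- State of the meta-algorithm with an abstract Commit procedure: current dyadic node,
phase of the binary-search step, feedback observed at the left endpoint in the current
safety check, and the Commit procedure's memory. -/
structure MSt (M : Type) where
  nd : ℕ × ℕ
  ph : Ph
  sL : Bool
  mem : M

/-- Price posted by the meta-algorithm: at a leaf (depth `D`), the Commit procedure's
price; at a non-leaf node, the safety check posts `L` then `R`, and on success the
midpoint `M` is posted. -/
noncomputable def mprice (D : ℕ) (P : CommitProc) (s : MSt P.M) : ℝ :=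
  if s.nd.1 = D then P.pr s.nd s.mem
  else
    match s.ph with
    | Ph.checkL => nodeL s.nd
    | Ph.checkR => nodeR s.nd
    | Ph.mid => nodeM s.nd

/-- One-round transition of the meta-algorithm (Algorithm 1): at a leaf, run the Commit
procedure and backtrack to the parent when it returns FAIL; at a non-leaf node, run the
safety check (backtracking to the parent if `σ_L = 0` or `σ_R = 1`) and otherwise descend
to `[M,R)` on `σ_M = 1` and to `[L,M)` on `σ_M = 0`. -/
def mstep (D : ℕ) (P : CommitProc) (s : MSt P.M) (b : Bool) (u : ℝ) : MSt P.M :=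
  if s.nd.1 = D then
    let r := P.next s.nd s.mem b u
    if r.1 then ⟨parent s.nd, Ph.checkL, true, r.2⟩ else ⟨s.nd, s.ph, s.sL, r.2⟩
  else
    match s.ph with
    | Ph.checkL => ⟨s.nd, Ph.checkR, b, s.mem⟩
    | Ph.checkR =>
      if s.sL = false ∨ b = true then ⟨parent s.nd, Ph.checkL, true, s.mem⟩
      else ⟨s.nd, Ph.mid, s.sL, s.mem⟩
    | Ph.mid => ⟨(if b then rightChild s.nd else leftChild s.nd), Ph.checkL, true, s.mem⟩

/-- State trajectory of the meta-algorithm under observed feedback `obs` and random seeds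
`u`, started from the root interval `[0,1)`. -/
noncomputable def mtraj (D : ℕ) (P : CommitProc) (obs : ℕ → Bool) (u : ℕ → ℝ) :
    ℕ → MSt P.M
  | 0 => ⟨(0, 0), Ph.checkL, true, P.init⟩
  | t + 1 => mstep D P (mtraj D P obs u t) (obs t) (u t)

/-- Price posted at round `t`. -/
noncomputable def priceAt (D : ℕ) (P : CommitProc) (obs : ℕ → Bool) (u : ℕ → ℝ)
    (t : ℕ) : ℝ :=
  mprice D P (mtraj D P obs u t)

/-- Number of corrupted rounds among the first `T` rounds: rounds where the observed
feedback differs from the truthful feedback `1{p_t ≤ v}`. -/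
noncomputable def corruptions (v : ℝ) (D : ℕ) (P : CommitProc) (obs : ℕ → Bool)
    (u : ℕ → ℝ) (T : ℕ) : ℕ :=
  ((Finset.range T).filter fun t => obs t ≠ decide (priceAt D P obs u t ≤ v)).card

/-- `N_T`: number of Commit calls returning FAIL (backtracking) on the correct leaf `ℓ*`. -/
noncomputable def NT (v : ℝ) (D : ℕ) (P : CommitProc) (obs : ℕ → Bool) (u : ℕ → ℝ)
    (T : ℕ) : ℕ :=
  ((Finset.range T).filter fun t =>
      (mtraj D P obs u t).nd = lstar v D ∧ (mtraj D P obs u (t + 1)).nd ≠ lstar v D).card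

/-- `N_F`: number of Commit calls returning FAIL (backtracking) on incorrect leaves. -/
noncomputable def NF (v : ℝ) (D : ℕ) (P : CommitProc) (obs : ℕ → Bool) (u : ℕ → ℝ)
    (T : ℕ) : ℕ :=
  ((Finset.range T).filter fun t =>
      (mtraj D P obs u t).nd.1 = D ∧ (mtraj D P obs u t).nd ≠ lstar v D ∧
        (mtraj D P obs u (t + 1)).nd ≠ (mtraj D P obs u t).nd).card

/-- `R(ℓ)`: regret accumulated over the rounds `Q(ℓ)` in which the algorithm runs the
Commit subroutine on the leaf `ℓ`, i.e. `Σ_{t ∈ Q(ℓ)} (v − p_t·1{p_t ≤ v})`. -/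
noncomputable def Rleaf (v : ℝ) (D : ℕ) (P : CommitProc) (obs : ℕ → Bool) (u : ℕ → ℝ)
    (T : ℕ) (l : ℕ × ℕ) : ℝ :=
  ∑ t ∈ (Finset.range T).filter (fun t => (mtraj D P obs u t).nd = l),
    (v - priceAt D P obs u t * (if priceAt D P obs u t ≤ v then 1 else 0))

/-- Cumulative regret over the horizon `T`: `R_T = T·v − Σ_{t<T} p_t·1{p_t ≤ v}`. -/
noncomputable def regret (v : ℝ) (D : ℕ) (P : CommitProc) (obs : ℕ → Bool) (u : ℕ → ℝ)
    (T : ℕ) : ℝ :=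
  (T : ℝ) * v - ∑ t ∈ Finset.range T,
    priceAt D P obs u t * (if priceAt D P obs u t ≤ v then 1 else 0)

/-! ### Distance to the correct leaf -/

/-- The dyadic interval of the node `p` contains `v`; equivalently `p` is an ancestor of the
correct leaf (or that leaf itself). -/
def On (v : ℝ) (p : ℕ × ℕ) : Prop := nodeL p ≤ v ∧ v < nodeR p

lemma on_iff {v : ℝ} (hv : 0 ≤ v) (p : ℕ × ℕ) : On v p ↔ p.2 = ⌊v * 2 ^ p.1⌋₊ := by
  have h2 : (0 : ℝ) < 2 ^ p.1 := by positivity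
  rw [eq_comm, Nat.floor_eq_iff (by positivity), On, nodeL, nodeR, div_le_iff₀ h2,
    lt_div_iff₀ h2]

lemma floor_half {v : ℝ} (e : ℕ) : ⌊v * 2 ^ (e + 1)⌋₊ / 2 = ⌊v * 2 ^ e⌋₊ := by
  have h := Nat.floor_div_natCast (v * 2 ^ (e + 1)) 2
  rw [← h]
  congr 1
  push_cast
  rw [pow_succ]
  ring

lemma on_parent {v : ℝ} (hv : 0 ≤ v) {p : ℕ × ℕ} (h : On v p) (hp : p.1 ≠ 0) :
    On v (parent p) := by
  obtain ⟨e, k⟩ := p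
  obtain ⟨e, rfl⟩ := Nat.exists_eq_succ_of_ne_zero hp
  rw [on_iff hv] at h ⊢
  simp only [parent, Nat.succ_eq_add_one, Nat.add_sub_cancel] at h ⊢
  rw [h, floor_half]

lemma on_root {v : ℝ} (hv : 0 ≤ v) (hv1 : v < 1) : On v (0, 0) := by
  simp [On, nodeL, nodeR, hv, hv1]

lemma parent_leftChild (p : ℕ × ℕ) : parent (leftChild p) = p := by
  simp [parent, leftChild]

lemma parent_rightChild (p : ℕ × ℕ) : parent (rightChild p) = p := by
  ext <;> simp [parent, rightChild]; omega

lemma on_rightChild {v : ℝ} {p : ℕ × ℕ} (h : On v p) (hm : nodeM p ≤ v) :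
    On v (rightChild p) := by
  refine ⟨?_, ?_⟩
  · simpa [nodeL, nodeM, rightChild] using hm
  · have : nodeR (rightChild p) = nodeR p := by
      simp only [nodeR, rightChild, pow_succ]
      push_cast
      field_simp
      ring
    rw [this]; exact h.2

lemma on_leftChild {v : ℝ} {p : ℕ × ℕ} (h : On v p) (hm : ¬ nodeM p ≤ v) :
    On v (leftChild p) := by
  refine ⟨?_, ?_⟩
  · have : nodeL (leftChild p) = nodeL p := by
      simp only [nodeL, leftChild, pow_succ]
      push_cast
      field_simp
    rw [this]; exact h.1
  · simpa [nodeR, nodeM, leftChild] using hm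

lemma eq_lstar_iff {v : ℝ} (hv : 0 ≤ v) {D : ℕ} {p : ℕ × ℕ} (hD : p.1 = D) :
    p = lstar v D ↔ On v p := by
  rw [on_iff hv, lstar, ← hD]
  constructor
  · intro h; rw [Prod.ext_iff] at h; exact h.2
  · intro h; exact Prod.ext rfl h

open Classical in
/-- `tdistAux v D e k` is the distance in the dyadic tree from the node `(e, k)` to the leaf of
depth `D` containing `v`: climb until an ancestor of that leaf is met, then descend. The value at
`e = 0` is the right one for the root `(0, 0)`, the only node of depth zero that is visited. -/
noncomputable def tdistAux (v : ℝ) (D : ℕ) : ℕ → ℕ → ℤ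
  | 0, _ => D
  | e + 1, k => if On v (e + 1, k) then (D : ℤ) - (e + 1) else tdistAux v D e (k / 2) + 1

/-- Tree distance from the node `p` to the correct leaf. -/
noncomputable def tdist (v : ℝ) (D : ℕ) (p : ℕ × ℕ) : ℤ := tdistAux v D p.1 p.2

lemma tdist_on {v : ℝ} {D : ℕ} {p : ℕ × ℕ} (h : On v p) : tdist v D p = D - p.1 := by
  obtain ⟨e, k⟩ := p
  cases e with
  | zero => simp [tdist, tdistAux]
  | succ e => simp [tdist, tdistAux, h]

lemma tdist_off {v : ℝ} {D : ℕ} {p : ℕ × ℕ} (h : ¬ On v p) (hp : p.1 ≠ 0) :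
    tdist v D p = tdist v D (parent p) + 1 := by
  obtain ⟨e, k⟩ := p
  cases e with
  | zero => simp at hp
  | succ e => simp [tdist, tdistAux, h, parent]

/-- The nodes the search can visit: dyadic subintervals of `[0, 1)` of depth at most `D`. -/
def Valid (D : ℕ) (p : ℕ × ℕ) : Prop := p.1 ≤ D ∧ p.2 < 2 ^ p.1

lemma Valid.on_of_zero {v : ℝ} (hv : 0 ≤ v) (hv1 : v < 1) {D : ℕ} {p : ℕ × ℕ}
    (h : Valid D p) (h0 : p.1 = 0) : On v p := by
  obtain ⟨e, k⟩ := p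
  obtain ⟨_, h2⟩ := h
  simp only at h0
  subst h0
  have : k = 0 := by simpa using h2
  subst this
  exact on_root hv hv1

lemma Valid.parent {D : ℕ} {p : ℕ × ℕ} (h : Valid D p) : Valid D (parent p) := by
  obtain ⟨e, k⟩ := p
  obtain ⟨h1, h2⟩ := h
  refine ⟨(Nat.sub_le _ _).trans h1, ?_⟩
  cases e with
  | zero => simp only [RobustPricing.parent, pow_zero] at h2 ⊢; omega
  | succ e =>
    simp only [RobustPricing.parent, pow_succ, Nat.add_sub_cancel] at h2 ⊢
    omega

lemma Valid.leftChild {D : ℕ} {p : ℕ × ℕ} (h : Valid D p) (hD : p.1 ≠ D) :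
    Valid D (leftChild p) := by
  obtain ⟨h1, h2⟩ := h
  refine ⟨by simp only [RobustPricing.leftChild]; omega, ?_⟩
  simp only [RobustPricing.leftChild, pow_succ]; omega

lemma Valid.rightChild {D : ℕ} {p : ℕ × ℕ} (h : Valid D p) (hD : p.1 ≠ D) :
    Valid D (rightChild p) := by
  obtain ⟨h1, h2⟩ := h
  refine ⟨by simp only [RobustPricing.rightChild]; omega, ?_⟩
  simp only [RobustPricing.rightChild, pow_succ]; omega

lemma tdist_nonneg {v : ℝ} (D : ℕ) : ∀ e k : ℕ, e ≤ D → 0 ≤ tdistAux v D e k := by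
  intro e
  induction e with
  | zero => intro k _; simp [tdistAux]
  | succ e ih =>
    intro k h
    have := ih (k / 2) (by omega)
    rw [tdistAux]
    split_ifs <;> omega

lemma Valid.tdist_nonneg {v : ℝ} {D : ℕ} {p : ℕ × ℕ} (h : Valid D p) : 0 ≤ tdist v D p :=
  RobustPricing.tdist_nonneg D _ _ h.1

lemma Valid.tdist_pos {v : ℝ} (hv : 0 ≤ v) (hv1 : v < 1) {D : ℕ} {p : ℕ × ℕ}
    (h : Valid D p) (hD : p.1 ≠ D) : 1 ≤ tdist v D p := by
  by_cases ho : On v p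
  · rw [tdist_on ho]; have := h.1; omega
  · rw [tdist_off ho (fun h0 => ho (h.on_of_zero hv hv1 h0))]
    have := h.parent.tdist_nonneg (v := v)
    omega

lemma Valid.tdist_parent_off {v : ℝ} (hv : 0 ≤ v) (hv1 : v < 1) {D : ℕ} {p : ℕ × ℕ}
    (h : Valid D p) (ho : ¬ On v p) : tdist v D (RobustPricing.parent p) = tdist v D p - 1 := by
  rw [tdist_off ho (fun h0 => ho (h.on_of_zero hv hv1 h0))]; ring

lemma Valid.tdist_parent_le {v : ℝ} (hv : 0 ≤ v) (hv1 : v < 1) {D : ℕ} {p : ℕ × ℕ}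
    (h : Valid D p) : tdist v D (RobustPricing.parent p) ≤ tdist v D p + 1 := by
  by_cases ho : On v p
  · by_cases h0 : p.1 = 0
    · have h' : On v (RobustPricing.parent p) :=
        h.parent.on_of_zero hv hv1 (by simp [RobustPricing.parent, h0])
      rw [tdist_on ho, tdist_on h']
      simp [RobustPricing.parent, h0]
    · rw [tdist_on ho, tdist_on (on_parent hv ho h0)]
      simp only [RobustPricing.parent]
      omega
  · rw [h.tdist_parent_off hv hv1 ho]; omega

lemma tdist_child_le {v : ℝ} {D : ℕ} {p q : ℕ × ℕ} (hq : parent q = p)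
    (hq1 : q.1 = p.1 + 1) (hv : 0 ≤ v) : tdist v D q ≤ tdist v D p + 1 := by
  by_cases ho : On v q
  · have hp : On v p := hq ▸ on_parent hv ho (by omega)
    rw [tdist_on ho, tdist_on hp]; omega
  · rw [tdist_off ho (by omega), hq]

lemma tdist_child_on {v : ℝ} {D : ℕ} {p q : ℕ × ℕ} (hp : On v p) (ho : On v q)
    (hq1 : q.1 = p.1 + 1) : tdist v D q = tdist v D p - 1 := by
  rw [tdist_on ho, tdist_on hp]; push_cast [hq1]; ring

/-! ### The one-round inequality -/

open Classical in
/-- Correction for a visit in progress in the count of internal rounds: the number of rounds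
already spent in the visit, less `6` if one of them was corrupted. -/
noncomputable def credit3 (v : ℝ) (D : ℕ) {M : Type} (s : MSt M) : ℤ :=
  if s.nd.1 = D then 0
  else
    match s.ph with
    | Ph.checkL => 0
    | Ph.checkR => if s.sL = decide (nodeL s.nd ≤ v) then 1 else -5
    | Ph.mid => if On v s.nd then 2 else -4

open Classical in
/-- Correction for a visit in progress in the bound on `N_F`: `-1` if one of the rounds of the
visit was corrupted, `0` otherwise. -/
noncomputable def credit1 (v : ℝ) (D : ℕ) {M : Type} (s : MSt M) : ℤ :=
  if s.nd.1 = D then 0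
  else
    match s.ph with
    | Ph.checkL => 0
    | Ph.checkR => if s.sL = decide (nodeL s.nd ≤ v) then 0 else -1
    | Ph.mid => if On v s.nd then 0 else -1

lemma credit3_le (v : ℝ) (D : ℕ) {M : Type} (s : MSt M) : credit3 v D s ≤ 2 := by
  obtain ⟨nd, ph, sL, mem⟩ := s
  cases ph <;> simp only [credit3] <;> split_ifs <;> norm_num

lemma credit1_le (v : ℝ) (D : ℕ) {M : Type} (s : MSt M) : credit1 v D s ≤ 0 := by
  obtain ⟨nd, ph, sL, mem⟩ := s
  cases ph <;> simp only [credit1] <;> split_ifs <;> norm_num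

/-- A visit that has just begun carries no correction. -/
lemma credit_fresh (v : ℝ) (D : ℕ) {M : Type} (p : ℕ × ℕ) (b : Bool) (m : M) :
    credit3 v D ⟨p, Ph.checkL, b, m⟩ = 0 ∧ credit1 v D ⟨p, Ph.checkL, b, m⟩ = 0 := by
  simp [credit3, credit1]

lemma valid_mstep {D : ℕ} {P : CommitProc} {s : MSt P.M} (h : Valid D s.nd) (b : Bool)
    (x : ℝ) : Valid D (mstep D P s b x).nd := by
  obtain ⟨nd, ph, sL, mem⟩ := s
  dsimp only at h
  by_cases hD : nd.1 = D
  · simp only [mstep, hD, if_true]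
    split_ifs
    · exact h.parent
    · exact h
  · cases ph <;> simp only [mstep, hD, if_false]
    · exact h
    · split_ifs
      · exact h.parent
      · exact h
    · split_ifs
      · exact h.rightChild hD
      · exact h.leftChild hD

open Classical in
/-- The change of the two corrected potentials in one round. The indicators are, in order: an
internal round, a FAIL on an incorrect leaf, a corruption, a FAIL on the correct leaf. -/
lemma step_bound {v : ℝ} (hv : 0 ≤ v) (hv1 : v < 1) {D : ℕ} {P : CommitProc} {s : MSt P.M}
    (h : Valid D s.nd) (b : Bool) (x : ℝ) (a nF c nT : ℤ)
    (ha : a = if s.nd.1 = D then 0 else 1)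
    (hF : nF = if s.nd.1 = D ∧ s.nd ≠ lstar v D ∧ (mstep D P s b x).nd ≠ s.nd then 1 else 0)
    (hc : c = if b ≠ decide (mprice D P s ≤ v) then 1 else 0)
    (hT : nT = if s.nd = lstar v D ∧ (mstep D P s b x).nd ≠ lstar v D then 1 else 0) :
    (a + 3 * nF + 3 * tdist v D (mstep D P s b x).nd - credit3 v D (mstep D P s b x)
      ≤ 6 * c + 3 * nT + 3 * tdist v D s.nd - credit3 v D s) ∧
    (nF + tdist v D (mstep D P s b x).nd - credit1 v D (mstep D P s b x)
      ≤ c + nT + tdist v D s.nd - credit1 v D s) := by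
  have hc0 : 0 ≤ c := by rw [hc]; split_ifs <;> norm_num
  have hT0 : 0 ≤ nT := by rw [hT]; split_ifs <;> norm_num
  have hup := h.tdist_parent_le hv hv1
  have hoff := h.tdist_parent_off hv hv1
  by_cases hD : s.nd.1 = D
  · have hs3 : credit3 v D s = 0 := by simp [credit3, hD]
    have hs1 : credit1 v D s = 0 := by simp [credit1, hD]
    rw [if_pos hD] at ha
    by_cases hr : (P.next s.nd s.mem b x).1 = true
    · have hm : mstep D P s b x
          = ⟨parent s.nd, Ph.checkL, true, (P.next s.nd s.mem b x).2⟩ := by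
        simp [mstep, hD, hr]
      rw [hm] at hF hT ⊢
      obtain ⟨f3, f1⟩ := credit_fresh v D (parent s.nd) true (P.next s.nd s.mem b x).2
      rw [f3, f1, hs3, hs1]
      dsimp only at hF hT ⊢
      by_cases ho : On v s.nd
      · have hl := (eq_lstar_iff hv hD).2 ho
        rw [if_neg (by tauto)] at hF
        by_cases hp : parent s.nd = lstar v D
        · -- only possible if the root is a leaf, so that backtracking stays put
          rw [hp, ← hl]; omega
        · rw [if_pos ⟨hl, hp⟩] at hT; omega
      · have hl := mt (eq_lstar_iff hv hD).1 ho
        have := hoff ho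
        have : nF ≤ 1 := by rw [hF]; split_ifs <;> norm_num
        omega
    · have hm : mstep D P s b x = ⟨s.nd, s.ph, s.sL, (P.next s.nd s.mem b x).2⟩ := by
        simp [mstep, hD, hr]
      rw [hm] at hF hT ⊢
      have f3 : credit3 v D (⟨s.nd, s.ph, s.sL, (P.next s.nd s.mem b x).2⟩ : MSt P.M) = 0 := by
        simp [credit3, hD]
      have f1 : credit1 v D (⟨s.nd, s.ph, s.sL, (P.next s.nd s.mem b x).2⟩ : MSt P.M) = 0 := by
        simp [credit1, hD]
      rw [f3, f1, hs3, hs1]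
      dsimp only at hF ⊢
      rw [if_neg (by tauto)] at hF
      omega
  · rw [if_neg hD] at ha
    rw [if_neg (by tauto)] at hF
    obtain ⟨nd, ph, sL, mem⟩ := s
    dsimp only at hD hup hoff h
    cases ph with
    | checkL =>
      simp only [mprice, hD, if_false] at hc
      simp only [mstep, credit3, credit1, hD, if_false]
      split_ifs at hc ⊢ <;> omega
    | checkR =>
      simp only [mprice, hD, if_false] at hc
      have hon : On v nd ↔ nodeL nd ≤ v ∧ ¬ nodeR nd ≤ v := by simp [On]
      by_cases hb : sL = false ∨ b = true
      · have hm : mstep D P ⟨nd, Ph.checkR, sL, mem⟩ b x = ⟨parent nd, Ph.checkL, true, mem⟩ := by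
          simp only [mstep, hD, if_false, if_pos hb]
        rw [hm, (credit_fresh ..).1, (credit_fresh ..).2]
        simp only [credit3, credit1, hD, if_false]
        by_cases hL : sL = decide (nodeL nd ≤ v)
        · by_cases hR : b = decide (nodeR nd ≤ v)
          · have ho : ¬ On v nd := by
              rw [hon]
              rcases hb with hb | hb
              · rw [hb] at hL; simp at hL; intro h; linarith [h.1]
              · rw [hb] at hR; simp at hR; tauto
            have := hoff ho
            simp only [hL, if_true]
            omega
          · rw [if_pos hR] at hc
            simp only [if_pos hL]; omega
        · simp only [if_neg hL]; omega
      · have hm : mstep D P ⟨nd, Ph.checkR, sL, mem⟩ b x = ⟨nd, Ph.mid, sL, mem⟩ := by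
          simp only [mstep, hD, if_false, if_neg hb]
        rw [hm]
        simp only [credit3, credit1, hD, if_false]
        obtain ⟨h1, h2⟩ : sL = true ∧ b = false := by simpa using hb
        subst h1 h2
        by_cases hl : nodeL nd ≤ v <;> by_cases hr : nodeR nd ≤ v <;>
          simp [hon, hl, hr] at hc ⊢ <;> omega
    | mid =>
      simp only [mprice, hD, if_false] at hc
      have hm : mstep D P ⟨nd, Ph.mid, sL, mem⟩ b x
          = ⟨(if b then rightChild nd else leftChild nd), Ph.checkL, true, mem⟩ := by
        simp only [mstep, hD, if_false]
      rw [hm, (credit_fresh ..).1, (credit_fresh ..).2]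
      simp only [credit3, credit1, hD, if_false]
      have hr := tdist_child_le (D := D) (parent_rightChild nd) rfl hv
      have hl := tdist_child_le (D := D) (parent_leftChild nd) rfl hv
      have hle : tdist v D (if b then rightChild nd else leftChild nd) ≤ tdist v D nd + 1 := by
        split_ifs <;> assumption
      by_cases ho : On v nd
      · simp only [if_pos ho]
        by_cases hb : b = decide (nodeM nd ≤ v)
        · have : tdist v D (if b then rightChild nd else leftChild nd) = tdist v D nd - 1 := by
            by_cases hM : nodeM nd ≤ v
            · simp only [hb, hM, decide_true, if_true]
              exact tdist_child_on ho (on_rightChild ho hM) rfl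
            · simp only [hb, hM, decide_false]
              exact tdist_child_on ho (on_leftChild ho hM) rfl
          omega
        · rw [if_pos hb] at hc; omega
      · simp only [if_neg ho]; omega

/-! ### Summation over the rounds -/

lemma valid_mtraj (D : ℕ) (P : CommitProc) (obs : ℕ → Bool) (u : ℕ → ℝ) (t : ℕ) :
    Valid D (mtraj D P obs u t).nd := by
  induction t with
  | zero => simp [mtraj, Valid]
  | succ t ih => exact valid_mstep ih _ _

/-- Number of the first `T` rounds spent at internal nodes. -/
noncomputable def internalRounds (D : ℕ) (P : CommitProc) (obs : ℕ → Bool) (u : ℕ → ℝ)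
    (T : ℕ) : ℕ :=
  ((Finset.range T).filter fun t => (mtraj D P obs u t).nd.1 ≠ D).card

lemma card_filter_range_succ (p : ℕ → Prop) [DecidablePred p] (t : ℕ) :
    (((Finset.range (t + 1)).filter p).card : ℤ)
      = ((Finset.range t).filter p).card + if p t then 1 else 0 := by
  simp only [Finset.card_filter, Finset.sum_range_succ]
  push_cast
  rfl

lemma potential_bound {v : ℝ} (hv : 0 ≤ v) (hv1 : v < 1) (D : ℕ) (P : CommitProc)
    (obs : ℕ → Bool) (u : ℕ → ℝ) (T : ℕ) :
    ((internalRounds D P obs u T : ℤ) + 3 * NF v D P obs u T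
        + 3 * tdist v D (mtraj D P obs u T).nd - credit3 v D (mtraj D P obs u T)
      ≤ 3 * D + 6 * corruptions v D P obs u T + 3 * NT v D P obs u T) ∧
    ((NF v D P obs u T : ℤ) + tdist v D (mtraj D P obs u T).nd
        - credit1 v D (mtraj D P obs u T)
      ≤ D + corruptions v D P obs u T + NT v D P obs u T) := by
  classical
  induction T with
  | zero =>
    obtain ⟨f3, f1⟩ := credit_fresh v D (0, 0) true P.init
    have eA : internalRounds D P obs u 0 = 0 := by simp [internalRounds]
    have eF : NF v D P obs u 0 = 0 := by simp [NF]
    have eC : corruptions v D P obs u 0 = 0 := by simp [corruptions]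
    have eT : NT v D P obs u 0 = 0 := by simp [NT]
    rw [eA, eF, eC, eT]
    simp [mtraj, f3, f1, tdist, tdistAux]
  | succ t ih =>
    have eA : (internalRounds D P obs u (t + 1) : ℤ) = internalRounds D P obs u t + _ :=
      card_filter_range_succ _ t
    have eF : (NF v D P obs u (t + 1) : ℤ) = NF v D P obs u t + _ := card_filter_range_succ _ t
    have eC : (corruptions v D P obs u (t + 1) : ℤ) = corruptions v D P obs u t + _ :=
      card_filter_range_succ _ t
    have eT : (NT v D P obs u (t + 1) : ℤ) = NT v D P obs u t + _ := card_filter_range_succ _ t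
    have key := step_bound hv hv1 (valid_mtraj D P obs u t) (obs t) (u t)
      (internalRounds D P obs u (t + 1) - internalRounds D P obs u t)
      (NF v D P obs u (t + 1) - NF v D P obs u t)
      (corruptions v D P obs u (t + 1) - corruptions v D P obs u t)
      (NT v D P obs u (t + 1) - NT v D P obs u t)
      (by rw [eA, add_sub_cancel_left, ite_not]) (by rw [eF, add_sub_cancel_left]; congr)
      (by rw [eC, add_sub_cancel_left]; congr) (by rw [eT, add_sub_cancel_left]; congr)
    rw [mtraj]
    constructor
    · linarith [ih.1, key.1]
    · linarith [ih.2, key.2]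

lemma internal_price_nonneg {D : ℕ} {P : CommitProc} {s : MSt P.M} (h : s.nd.1 ≠ D) :
    0 ≤ mprice D P s := by
  rw [mprice, if_neg h]
  split
  · unfold nodeL; positivity
  · unfold nodeR; positivity
  · unfold nodeM; positivity

/-- The leaf regrets together account for all rounds spent at depth `D`. -/
lemma sum_Rleaf (v : ℝ) (D : ℕ) (P : CommitProc) (obs : ℕ → Bool) (u : ℕ → ℝ) (T : ℕ) :
    ∑ j ∈ Finset.range (2 ^ D), Rleaf v D P obs u T (D, j)
      = ∑ t ∈ Finset.range T, if (mtraj D P obs u t).nd.1 = D then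
          (v - priceAt D P obs u t * (if priceAt D P obs u t ≤ v then 1 else 0)) else 0 := by
  simp only [Rleaf, Finset.sum_filter]
  rw [Finset.sum_comm]
  refine Finset.sum_congr rfl fun t _ => ?_
  obtain ⟨-, h2⟩ := valid_mtraj D P obs u t
  by_cases hD : (mtraj D P obs u t).nd.1 = D
  · rw [if_pos hD, Finset.sum_eq_single (mtraj D P obs u t).nd.2]
    · rw [if_pos (show (mtraj D P obs u t).nd = (D, (mtraj D P obs u t).nd.2) from Prod.ext hD rfl)]
    · intro j _ hj
      rw [if_neg]
      intro h
      exact hj (by rw [h])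
    · intro h
      rw [hD] at h2
      exact absurd (Finset.mem_range.2 h2) h
  · rw [if_neg hD]
    refine Finset.sum_eq_zero fun j _ => if_neg fun h => hD (by rw [h])

lemma regret_le {v : ℝ} (hv1 : v < 1) (D : ℕ) (P : CommitProc) (obs : ℕ → Bool)
    (u : ℕ → ℝ) (T : ℕ) :
    regret v D P obs u T
      ≤ ∑ j ∈ Finset.range (2 ^ D), Rleaf v D P obs u T (D, j) + internalRounds D P obs u T := by
  have hreg : regret v D P obs u T = ∑ t ∈ Finset.range T,
      (v - priceAt D P obs u t * (if priceAt D P obs u t ≤ v then 1 else 0)) := by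
    rw [Finset.sum_sub_distrib]; simp [regret]
  rw [hreg, sum_Rleaf, internalRounds, Finset.card_filter, Nat.cast_sum,
    ← Finset.sum_add_distrib]
  refine Finset.sum_le_sum fun t _ => ?_
  by_cases hD : (mtraj D P obs u t).nd.1 = D
  · simp [hD]
  · have h0 : 0 ≤ priceAt D P obs u t := internal_price_nonneg hD
    simp only [hD, if_false, ne_eq, not_false_eq_true, if_true, Nat.cast_one]
    split_ifs <;> linarith

/-- Assume the feedback is corrupted in at most `C` rounds.  Then the
meta-algorithm (Algorithm 1, with leaves at depth `D = ⌈log₂ T⌉`, run with an arbitrary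
Commit procedure posting prices in `[0,1]`, against a valuation `v ∈ [0,1)`) limits the
number of Commit calls returning FAIL on incorrect leaves to `N_F ≤ log₂ T + C + N_T`,
and its regret is at most `R_T ≤ Σ_{ℓ ∈ L} R(ℓ) + 3·log₂ T + 6·C + 3·N_T`. -/
theorem meta_algorithm_regret_decomposition
    (T C : ℕ) (v : ℝ) (hv : 0 ≤ v) (hv1 : v < 1)
    (P : CommitProc) (hP : ∀ nd m, P.pr nd m ∈ Set.Icc (0 : ℝ) 1)
    (obs : ℕ → Bool) (u : ℕ → ℝ)
    (hC : corruptions v (Nat.clog 2 T) P obs u T ≤ C) :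
    NF v (Nat.clog 2 T) P obs u T
        ≤ Nat.clog 2 T + C + NT v (Nat.clog 2 T) P obs u T ∧
    regret v (Nat.clog 2 T) P obs u T
      ≤ (∑ j ∈ Finset.range (2 ^ Nat.clog 2 T),
            Rleaf v (Nat.clog 2 T) P obs u T (Nat.clog 2 T, j))
        + 3 * (Nat.clog 2 T : ℝ) + 6 * (C : ℝ)
        + 3 * (NT v (Nat.clog 2 T) P obs u T : ℝ) := by
  obtain ⟨h3, h1⟩ := potential_bound hv hv1 (Nat.clog 2 T) P obs u T
  have hval := valid_mtraj (Nat.clog 2 T) P obs u T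
  have hd0 := hval.tdist_nonneg (v := v)
  have hreg := regret_le hv1 (Nat.clog 2 T) P obs u T
  have c1 := credit1_le v (Nat.clog 2 T) (mtraj (Nat.clog 2 T) P obs u T)
  refine ⟨by omega, ?_⟩
  -- an unfinished visit is paid for by the positive distance of an internal node
  have c3 : credit3 v (Nat.clog 2 T) (mtraj (Nat.clog 2 T) P obs u T)
      ≤ 3 * tdist v (Nat.clog 2 T) (mtraj (Nat.clog 2 T) P obs u T).nd := by
    by_cases hD : (mtraj (Nat.clog 2 T) P obs u T).nd.1 = Nat.clog 2 T
    · rw [credit3, if_pos hD]; omega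
    · have := hval.tdist_pos hv hv1 hD
      have := credit3_le v (Nat.clog 2 T) (mtraj (Nat.clog 2 T) P obs u T)
      omega
  have hA : internalRounds (Nat.clog 2 T) P obs u T
      ≤ 3 * Nat.clog 2 T + 6 * C + 3 * NT v (Nat.clog 2 T) P obs u T := by omega
  have hA' : (internalRounds (Nat.clog 2 T) P obs u T : ℝ)
      ≤ 3 * (Nat.clog 2 T : ℝ) + 6 * (C : ℝ) + 3 * (NT v (Nat.clog 2 T) P obs u T : ℝ) := by
    exact_mod_cast hA
  linarith

end RobustPricing
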